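/- Let α, β > -1. Then there exist constants 0 < c ≤ C (depending only on α and β) such that for all 0 < t ≤ 1 and all θ, φ ∈ [0,π]: c · E ≤ 𝓗_t^{α,β}(θ,φ) ≤ C · E, where E := (t² + θ² + φ²)^{-α-1/2} (t² + (π−θ)² + (π−φ)²)^{-β-1/2} · t/(t² + (θ−φ)²). -/

import Mathlib

open MeasureTheory Real Set
open scoped ENNReal Classical

noncomputable def cab (α β : ℝ) : ℝ :=
  Real.Gamma (α + β + 2) / (2 ^ (α + β + 1) * Real.Gamma (α + 1) * Real.Gamma (β + 1))

noncomputable def F4 (a₁ a₂ b₁ b₂ x y : ℝ) : ℝ :=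
  ∑' p : ℕ × ℕ,
    (Polynomial.eval a₁ (ascPochhammer ℝ (p.1 + p.2)) *
      Polynomial.eval a₂ (ascPochhammer ℝ (p.1 + p.2))) /
    (Polynomial.eval b₁ (ascPochhammer ℝ p.1) * Polynomial.eval b₂ (ascPochhammer ℝ p.2) *
      (Nat.factorial p.1) * (Nat.factorial p.2)) * x ^ p.1 * y ^ p.2

noncomputable def Hker (α β t θ φ : ℝ) : ℝ :=
  cab α β * Real.sinh (t / 2) / Real.cosh (t / 2) ^ (α + β + 2) *
    F4 ((α + β + 2) / 2) ((α + β + 3) / 2) (α + 1) (β + 1)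
      ((Real.sin (θ / 2) * Real.sin (φ / 2) / Real.cosh (t / 2)) ^ 2)
      ((Real.cos (θ / 2) * Real.cos (φ / 2) / Real.cosh (t / 2)) ^ 2)

noncomputable def qf (θ φ u v : ℝ) : ℝ :=
  1 - u * Real.sin (θ / 2) * Real.sin (φ / 2) - v * Real.cos (θ / 2) * Real.cos (φ / 2)

noncomputable def Psi (α β t θ φ u v : ℝ) : ℝ :=
  cab α β * Real.sinh (t / 2) / (Real.cosh (t / 2) - 1 + qf θ φ u v) ^ (α + β + 2)

noncomputable def PsiE (α β t θ φ u v : ℝ) : ℝ :=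
  (Psi α β t θ φ u v + Psi α β t θ φ (-u) v + Psi α β t θ φ u (-v) +
    Psi α β t θ φ (-u) (-v)) / 4

noncomputable def PiMeas (ν : ℝ) : Measure ℝ :=
  if ν = -(1/2) then (2⁻¹ : ℝ≥0∞) • (Measure.dirac (-1) + Measure.dirac 1)
  else (volume.restrict (Icc (-1 : ℝ) 1)).withDensity
    (fun u => ENNReal.ofReal
      (Real.Gamma (ν + 1) / (Real.sqrt π * Real.Gamma (ν + 1/2)) * (1 - u ^ 2) ^ (ν - 1/2)))

noncomputable def PiFun (γ u : ℝ) : ℝ :=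
  Real.Gamma (γ + 1) / (Real.sqrt π * Real.Gamma (γ + 1/2)) *
    ∫ w in (0 : ℝ)..u, (1 - w ^ 2) ^ (γ - 1/2)

noncomputable def PiInt (ν : ℝ) (S : Set ℝ) (f : ℝ → ℝ) : ℝ :=
  if ν = -(1/2) then
    ((if (-1 : ℝ) ∈ S then f (-1) else 0) + (if (1 : ℝ) ∈ S then f 1 else 0)) / 2
  else ∫ u in S, f u *
    (Real.Gamma (ν + 1) / (Real.sqrt π * Real.Gamma (ν + 1/2)) * (1 - u ^ 2) ^ (ν - 1/2))

noncomputable def muab (α β : ℝ) : Measure ℝ :=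
  (volume.restrict (Icc (0 : ℝ) π)).withDensity
    (fun θ => ENNReal.ofReal (Real.sin (θ / 2) ^ (2 * α + 1) * Real.cos (θ / 2) ^ (2 * β + 1)))

def ballI (θ r : ℝ) : Set ℝ := Ioo (θ - r) (θ + r) ∩ Icc 0 π

/-!
Write `X`, `Y` for the square roots of the two arguments of `F4`, and `δ = 1 - X - Y`. Gamma
asymptotics show that the coefficient of `X ^ (2 * m) * Y ^ (2 * n)` is comparable to
`binom(2m+2n, 2m)` times powers of `m + n + 1`, `m + 1` and `n + 1`. The binomials alone sum to the
even part of `∑ (X + Y) ^ N`, under which these three quantities have typical sizes `1 / δ`,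
`(1 - Y) / δ` and `(1 - X) / δ`. Measured in these units, every mixed moment of large enough order
in `m + n + 1` is comparable to `1`, uniformly in `X` and `Y`: the pure moments in `m + n + 1` are
binomial series; the relation between neighbouring binomials raises or lowers the order in `m + 1`
or `n + 1` by two; and Hölder's inequality makes the moments log-convex in their orders, which gives
all intermediate orders and turns upper bounds into lower bounds. Hence `F4` is comparable to an
explicit product of powers of `δ`, `1 - Y` and `1 - X`, which for the arguments of the kernel are
comparable to `t² + (θ - φ)²`, `t² + θ² + φ²` and `t² + (π - θ)² + (π - φ)²`.
-/

open Asymptotics Filter Topology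
open scoped NNReal

section Comparison

lemma isTheta_comp_of_tendsto {ι κ : Type*} {l : Filter κ} {l' : Filter ι} {f g : κ → ℝ}
    {k : ι → κ} (h : f =Θ[l] g) (hk : Tendsto k l' l) :
    (fun i => f (k i)) =Θ[l'] fun i => g (k i) :=
  ⟨h.1.comp_tendsto hk, h.2.comp_tendsto hk⟩

lemma isTheta_top_of_isTheta_atTop {f g : ℕ → ℝ} (hf : ∀ n, 0 < f n) (hg : ∀ n, 0 < g n)
    (h : f =Θ[atTop] g) : f =Θ[⊤] g :=
  ⟨h.1.nat_of_atTop (Eventually.of_forall fun n hn => absurd hn (hg n).ne'),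
    h.2.nat_of_atTop (Eventually.of_forall fun n hn => absurd hn (hf n).ne')⟩

lemma isTheta_principal_of_le_mul {ι : Type*} {S : Set ι} {f g : ι → ℝ} {C D : ℝ}
    (hf : ∀ i ∈ S, 0 ≤ f i) (hg : ∀ i ∈ S, 0 ≤ g i) (hfg : ∀ i ∈ S, f i ≤ C * g i)
    (hgf : ∀ i ∈ S, g i ≤ D * f i) : f =Θ[𝓟 S] g := by
  refine ⟨isBigO_principal.2 ⟨C, fun i hi => ?_⟩, isBigO_principal.2 ⟨D, fun i hi => ?_⟩⟩ <;>
    rw [Real.norm_of_nonneg (hf i hi), Real.norm_of_nonneg (hg i hi)]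
  exacts [hfg i hi, hgf i hi]

lemma isTheta_rpow_principal_of_le_mul {ι : Type*} {S : Set ι} {f g : ι → ℝ} {C D : ℝ}
    (hf : ∀ i ∈ S, 0 ≤ f i) (hg : ∀ i ∈ S, 0 ≤ g i) (hfg : ∀ i ∈ S, f i ≤ C * g i ∧ g i ≤ D * f i)
    (r : ℝ) : (fun i => f i ^ r) =Θ[𝓟 S] fun i => g i ^ r :=
  IsTheta.rpow (eventually_principal.2 hf) (eventually_principal.2 hg)
    (isTheta_principal_of_le_mul hf hg (fun i hi => (hfg i hi).1) fun i hi => (hfg i hi).2)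

lemma exists_mul_le_of_isTheta_principal {ι : Type*} {S : Set ι} {f g : ι → ℝ}
    (hf : ∀ i ∈ S, 0 ≤ f i) (hg : ∀ i ∈ S, 0 ≤ g i) (h : f =Θ[𝓟 S] g) :
    ∃ c C : ℝ, 0 < c ∧ c ≤ C ∧ ∀ i ∈ S, c * g i ≤ f i ∧ f i ≤ C * g i := by
  obtain ⟨C, hfg⟩ := isBigO_principal.1 h.1
  obtain ⟨D, hD, hgf⟩ := h.2.exists_pos
  rw [IsBigOWith_def, eventually_principal] at hgf
  refine ⟨D⁻¹, max D⁻¹ C, inv_pos.2 hD, le_max_left _ _, fun i hi => ?_⟩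
  have hfg := hfg i hi
  have hgf := hgf i hi
  rw [Real.norm_of_nonneg (hf i hi), Real.norm_of_nonneg (hg i hi)] at hfg hgf
  exact ⟨(inv_mul_le_iff₀ hD).2 hgf,
    hfg.trans (mul_le_mul_of_nonneg_right (le_max_right _ _) (hg i hi))⟩

end Comparison

section Pochhammer

lemma ascPochhammer_eval_eq_prod (x : ℝ) (n : ℕ) :
    (ascPochhammer ℝ n).eval x = ∏ j ∈ Finset.range n, (x + j) := by
  induction n with
  | zero => simp
  | succ n ih => rw [ascPochhammer_succ_eval, ih, Finset.prod_range_succ]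

lemma tendsto_ascPochhammer_div_Gamma {x : ℝ} (hx : 0 < x) :
    Tendsto (fun n : ℕ => (n.factorial * (n + 1 : ℝ) ^ (x - 1)) / (ascPochhammer ℝ n).eval x)
      atTop (𝓝 (Real.Gamma x)) := by
  have hratio : Tendsto (fun n : ℕ => ((n : ℝ) / (n + 1)) ^ (-x) * ((n + x) / (n + 1)))
      atTop (𝓝 1) := by
    have h₁ : Tendsto (fun n : ℕ => (n : ℝ) / (n + 1)) atTop (𝓝 1) :=
      tendsto_natCast_div_add_atTop 1
    have h₀ : Tendsto (fun n : ℕ => 1 / ((n : ℝ) + 1)) atTop (𝓝 0) :=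
      tendsto_one_div_add_atTop_nhds_zero_nat
    simpa [div_eq_mul_inv, add_mul] using
      (h₁.rpow_const (p := -x) (Or.inl one_ne_zero)).mul (h₁.add (h₀.const_mul x))
  rw [← mul_one (Real.Gamma x)]
  refine ((Real.GammaSeq_tendsto_Gamma x).mul hratio).congr' ?_
  filter_upwards [eventually_gt_atTop 0] with n hn
  have hn' : (0 : ℝ) < n := by exact_mod_cast hn
  have hpoch := ascPochhammer_pos n x hx
  rw [Real.GammaSeq, ← ascPochhammer_eval_eq_prod, ascPochhammer_succ_eval,
    Real.div_rpow hn'.le (by positivity), Real.rpow_neg hn'.le, Real.rpow_neg (by positivity),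
    Real.rpow_sub (by positivity), Real.rpow_one]
  field_simp
  ring

lemma isTheta_ascPochhammer_div {x y : ℝ} (hx : 0 < x) (hy : 0 < y) :
    (fun n : ℕ => (ascPochhammer ℝ n).eval x / (ascPochhammer ℝ n).eval y) =Θ[⊤]
      fun n : ℕ => (n + 1 : ℝ) ^ (x - y) := by
  have hpoch {z : ℝ} (hz : 0 < z) (n : ℕ) := ascPochhammer_pos n z hz
  have hgrowth {z : ℝ} (hz : 0 < z) : (fun n : ℕ => (ascPochhammer ℝ n).eval z) =Θ[⊤]
      fun n : ℕ => (n.factorial : ℝ) * (n + 1 : ℝ) ^ (z - 1) :=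
    isTheta_top_of_isTheta_atTop (hpoch hz) (fun n => by positivity)
      (isTheta_of_div_tendsto_nhds_ne_zero (tendsto_ascPochhammer_div_Gamma hz)
        (Real.Gamma_pos_of_pos hz).ne')
  refine ((hgrowth hx).div (hgrowth hy)).trans_eventuallyEq (Eventually.of_forall fun n => ?_)
  have hn : (0 : ℝ) < n + 1 := by positivity
  simp only [mul_div_mul_left _ _ (Nat.cast_ne_zero.2 n.factorial_ne_zero : (n.factorial : ℝ) ≠ 0),
    ← Real.rpow_sub hn, sub_sub_sub_cancel_right]

lemma hasSum_ascPochhammer_div_factorial (s : ℝ) {r : ℝ} (hr : |r| < 1) :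
    HasSum (fun n : ℕ => (ascPochhammer ℝ n).eval s / n.factorial * r ^ n) ((1 - r) ^ (-s)) := by
  have hseries := (Real.one_div_one_sub_rpow_hasFPowerSeriesOnBall_zero s).hasSum (y := r) (by
    simpa [enorm_eq_nnnorm, ← NNReal.coe_lt_coe] using hr)
  simp only [FormalMultilinearSeries.ofScalars_apply_eq, smul_eq_mul, zero_add, one_div]
    at hseries
  rw [Real.rpow_neg (by linarith [le_abs_self r])]
  refine hseries.congr_fun fun n => ?_
  have hmultichoose := Ring.factorial_nsmul_multichoose_eq_ascPochhammer s n
  rw [Polynomial.ascPochhammer_smeval_eq_eval, nsmul_eq_mul] at hmultichoose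
  have hchoose : Ring.choose (s + n - 1) n = Ring.multichoose s n := by
    rw [Ring.choose, show s + n - 1 - n + 1 = s by ring]
  rw [hchoose, ← hmultichoose, mul_div_cancel_left₀ _ (by positivity), mul_comm]

lemma factorial_two_mul_eq_ascPochhammer (n : ℕ) :
    ((2 * n).factorial : ℝ) = 4 ^ n * n.factorial * (ascPochhammer ℝ n).eval (1 / 2) := by
  induction n with
  | zero => simp
  | succ n ih =>
    rw [show 2 * (n + 1) = 2 * n + 1 + 1 by ring, Nat.factorial_succ, Nat.factorial_succ,
      Nat.factorial_succ, ascPochhammer_succ_eval]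
    push_cast
    rw [ih]
    ring

end Pochhammer

section AppellCoefficients

/-- The coefficient of `x ^ m * y ^ n` in `F4 a₁ a₂ b₁ b₂ x y`, for `p = (m, n)`. -/
noncomputable def appellCoeff (a₁ a₂ b₁ b₂ : ℝ) (p : ℕ × ℕ) : ℝ :=
  ((ascPochhammer ℝ (p.1 + p.2)).eval a₁ * (ascPochhammer ℝ (p.1 + p.2)).eval a₂) /
    ((ascPochhammer ℝ p.1).eval b₁ * (ascPochhammer ℝ p.2).eval b₂ *
      p.1.factorial * p.2.factorial)

variable {a₁ a₂ b₁ b₂ : ℝ}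

lemma appellCoeff_pos (ha₁ : 0 < a₁) (ha₂ : 0 < a₂) (hb₁ : 0 < b₁) (hb₂ : 0 < b₂)
    (p : ℕ × ℕ) : 0 < appellCoeff a₁ a₂ b₁ b₂ p := by
  have ha₁' := ascPochhammer_pos (p.1 + p.2) a₁ ha₁
  have ha₂' := ascPochhammer_pos (p.1 + p.2) a₂ ha₂
  have hb₁' := ascPochhammer_pos p.1 b₁ hb₁
  have hb₂' := ascPochhammer_pos p.2 b₂ hb₂
  rw [appellCoeff]
  positivity

lemma choose_two_mul_eq_ascPochhammer (m n : ℕ) :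
    ((2 * (m + n)).choose (2 * m) : ℝ) =
      ((m + n).factorial * (ascPochhammer ℝ (m + n)).eval (1 / 2)) /
        (m.factorial * (ascPochhammer ℝ m).eval (1 / 2) *
          (n.factorial * (ascPochhammer ℝ n).eval (1 / 2))) := by
  have hm := ascPochhammer_pos m (1 / 2 : ℝ) (by norm_num)
  have hn := ascPochhammer_pos n (1 / 2 : ℝ) (by norm_num)
  rw [mul_add, Nat.cast_add_choose, ← mul_add]
  simp only [factorial_two_mul_eq_ascPochhammer, pow_add]
  field_simp

lemma appellCoeff_eq_choose_mul (a₁ a₂ b₁ b₂ : ℝ) (m n : ℕ) :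
    appellCoeff a₁ a₂ b₁ b₂ (m, n) = (2 * (m + n)).choose (2 * m) *
      ((ascPochhammer ℝ (m + n)).eval a₁ / (ascPochhammer ℝ (m + n)).eval 1 *
        ((ascPochhammer ℝ (m + n)).eval a₂ / (ascPochhammer ℝ (m + n)).eval (1 / 2))) *
      ((ascPochhammer ℝ m).eval (1 / 2) / (ascPochhammer ℝ m).eval b₁) *
      ((ascPochhammer ℝ n).eval (1 / 2) / (ascPochhammer ℝ n).eval b₂) := by
  have hhalf (k : ℕ) := (ascPochhammer_pos k (1 / 2 : ℝ) (by norm_num)).ne'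
  have hm := hhalf m
  have hn := hhalf n
  have hmn := hhalf (m + n)
  rw [choose_two_mul_eq_ascPochhammer, ascPochhammer_eval_one, appellCoeff]
  field_simp

lemma isTheta_appellCoeff (ha₁ : 0 < a₁) (ha₂ : 0 < a₂) (hb₁ : 0 < b₁) (hb₂ : 0 < b₂) :
    appellCoeff a₁ a₂ b₁ b₂ =Θ[⊤] fun p => ((2 * (p.1 + p.2)).choose (2 * p.1) : ℝ) *
      (p.1 + p.2 + 1 : ℝ) ^ (a₁ + a₂ - 1 / 2 - 1) * (p.1 + 1 : ℝ) ^ (1 / 2 - b₁) *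
      (p.2 + 1 : ℝ) ^ (1 / 2 - b₂) := by
  have hhalf : (0 : ℝ) < 1 / 2 := by norm_num
  have hchoose := isTheta_refl (fun p : ℕ × ℕ => ((2 * (p.1 + p.2)).choose (2 * p.1) : ℝ)) ⊤
  have hcomp {f g : ℕ → ℝ} (h : f =Θ[⊤] g) (k : ℕ × ℕ → ℕ) :
      (fun p => f (k p)) =Θ[⊤] fun p => g (k p) := isTheta_comp_of_tendsto h tendsto_top
  have ha₁' := hcomp (isTheta_ascPochhammer_div ha₁ one_pos) fun p : ℕ × ℕ => p.1 + p.2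
  have ha₂' := hcomp (isTheta_ascPochhammer_div ha₂ hhalf) fun p : ℕ × ℕ => p.1 + p.2
  have hb₁' := hcomp (isTheta_ascPochhammer_div hhalf hb₁) fun p : ℕ × ℕ => p.1
  have hb₂' := hcomp (isTheta_ascPochhammer_div hhalf hb₂) fun p : ℕ × ℕ => p.2
  rw [show appellCoeff a₁ a₂ b₁ b₂ = _ from
    funext fun p => appellCoeff_eq_choose_mul a₁ a₂ b₁ b₂ p.1 p.2]
  refine (((hchoose.mul (ha₁'.mul ha₂')).mul hb₁').mul hb₂').trans_eventuallyEq
    (Eventually.of_forall fun p => ?_)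
  simp only [Nat.cast_add]
  rw [← Real.rpow_add (by positivity), show a₁ - 1 + (a₂ - 1 / 2) = a₁ + a₂ - 1 / 2 - 1 by ring]

end AppellCoefficients

section Moments

/-- The monomial `binom(2m+2n, 2m) X^(2m) Y^(2n)` for `p = (m, n)`, a term of the even part of the
geometric series `∑ (X + Y)^N`. -/
noncomputable def evenBinomTerm (X Y : ℝ) (p : ℕ × ℕ) : ℝ :=
  (2 * (p.1 + p.2)).choose (2 * p.1) * X ^ (2 * p.1) * Y ^ (2 * p.2)

/-- The monomial `evenBinomTerm X Y (m, n)` weighted by powers of `m + n + 1`, `m + 1` and `n + 1`,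
each measured in units of its typical size `1 / (1-X-Y)`, `(1-Y) / (1-X-Y)` and
`(1-X) / (1-X-Y)`. -/
noncomputable def momentTerm (s A B X Y : ℝ) (p : ℕ × ℕ) : ℝ :=
  evenBinomTerm X Y p / (p.1 + p.2 + 1) * ((1 - X - Y) * (p.1 + p.2 + 1)) ^ s *
    ((1 - X - Y) / (1 - Y) * (p.1 + 1)) ^ A * ((1 - X - Y) / (1 - X) * (p.2 + 1)) ^ B

/-- The normalised mixed moment of orders `(s, A, B)`; it takes values in `[0, ∞]`, so that no
summability has to be tracked. -/
noncomputable def moment (s A B X Y : ℝ) : ℝ≥0∞ :=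
  ∑' p, ENNReal.ofReal (momentTerm s A B X Y p)

/-- The moment of orders `(s, A, B)` is bounded uniformly on the triangle of convergence. -/
def MomentBounded (s A B : ℝ) : Prop :=
  ∃ C : ℝ≥0, ∀ X Y : ℝ, 0 ≤ X → 0 ≤ Y → X + Y < 1 → moment s A B X Y ≤ C

variable {s s₀ s₁ A A₀ A₁ B B₀ B₁ u v X Y : ℝ}

lemma momentTerm_nonneg (hX : 0 ≤ X) (hY : 0 ≤ Y) (hXY : X + Y < 1) (p : ℕ × ℕ) :
    0 ≤ momentTerm s A B X Y p := by
  have hδ : 0 < 1 - X - Y := by linarith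
  have hX' : 0 < 1 - X := by linarith
  have hY' : 0 < 1 - Y := by linarith
  rw [momentTerm, evenBinomTerm]
  positivity

lemma tsum_rpow_mul_rpow_le {ι : Type*} (f g : ι → ℝ≥0∞) (hu : 0 ≤ u) (hv : 0 ≤ v)
    (huv : u + v = 1) : ∑' i, f i ^ u * g i ^ v ≤ (∑' i, f i) ^ u * (∑' i, g i) ^ v := by
  let _ : MeasurableSpace ι := ⊤
  simp only [← lintegral_count]
  exact ENNReal.lintegral_mul_norm_pow_le (measurable_from_top.aemeasurable)
    (measurable_from_top.aemeasurable) hu hv huv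

lemma momentTerm_interpolate (hX : 0 ≤ X) (hY : 0 ≤ Y) (hXY : X + Y < 1)
    (hu : 0 ≤ u) (hv : 0 ≤ v) (huv : u + v = 1) (p : ℕ × ℕ) :
    momentTerm (u * s₀ + v * s₁) (u * A₀ + v * A₁) (u * B₀ + v * B₁) X Y p =
      momentTerm s₀ A₀ B₀ X Y p ^ u * momentTerm s₁ A₁ B₁ X Y p ^ v := by
  have hδ : 0 < 1 - X - Y := by linarith
  have hX' : 0 < 1 - X := by linarith
  have hY' : 0 < 1 - Y := by linarith
  have hsplit {x : ℝ} (hx : 0 < x) (r₀ r₁ : ℝ) :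
      x ^ (u * r₀ + v * r₁) = (x ^ r₀) ^ u * (x ^ r₁) ^ v := by
    rw [Real.rpow_add hx, mul_comm u, mul_comm v, Real.rpow_mul hx.le, Real.rpow_mul hx.le]
  have hcoeff : 0 ≤ evenBinomTerm X Y p / (p.1 + p.2 + 1) := by
    rw [evenBinomTerm]
    positivity
  simp only [momentTerm]
  generalize evenBinomTerm X Y p / (p.1 + p.2 + 1) = c at hcoeff ⊢
  have hc : c = c ^ u * c ^ v := by
    rw [← Real.rpow_add_of_nonneg hcoeff hu hv, huv, Real.rpow_one]
  rw [hsplit (by positivity), hsplit (by positivity), hsplit (by positivity)]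
  nth_rw 1 [hc]
  repeat rw [Real.mul_rpow (by positivity) (by positivity)]
  ring

lemma moment_interpolate_le (hX : 0 ≤ X) (hY : 0 ≤ Y) (hXY : X + Y < 1)
    (hu : 0 ≤ u) (hv : 0 ≤ v) (huv : u + v = 1) :
    moment (u * s₀ + v * s₁) (u * A₀ + v * A₁) (u * B₀ + v * B₁) X Y ≤
      moment s₀ A₀ B₀ X Y ^ u * moment s₁ A₁ B₁ X Y ^ v := by
  refine le_of_eq_of_le (tsum_congr fun p => ?_) (tsum_rpow_mul_rpow_le _ _ hu hv huv)
  have h₀ := momentTerm_nonneg (s := s₀) (A := A₀) (B := B₀) hX hY hXY p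
  have h₁ := momentTerm_nonneg (s := s₁) (A := A₁) (B := B₁) hX hY hXY p
  rw [momentTerm_interpolate hX hY hXY hu hv huv, ENNReal.ofReal_mul (Real.rpow_nonneg h₀ u),
    ENNReal.ofReal_rpow_of_nonneg h₀ hu, ENNReal.ofReal_rpow_of_nonneg h₁ hv]

lemma MomentBounded.interpolate (h₀ : MomentBounded s₀ A₀ B₀) (h₁ : MomentBounded s₁ A₁ B₁)
    (hu : 0 ≤ u) (hv : 0 ≤ v) (huv : u + v = 1) :
    MomentBounded (u * s₀ + v * s₁) (u * A₀ + v * A₁) (u * B₀ + v * B₁) := by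
  obtain ⟨C₀, hC₀⟩ := h₀
  obtain ⟨C₁, hC₁⟩ := h₁
  refine ⟨C₀ ^ u * C₁ ^ v, fun X Y hX hY hXY => ?_⟩
  rw [ENNReal.coe_mul, ENNReal.coe_rpow_of_nonneg _ hu, ENNReal.coe_rpow_of_nonneg _ hv]
  refine (moment_interpolate_le hX hY hXY hu hv huv).trans ?_
  gcongr
  exacts [hC₀ X Y hX hY hXY, hC₁ X Y hX hY hXY]

lemma moment_swap (s A B X Y : ℝ) : moment s A B X Y = moment s B A Y X := by
  rw [moment, ← (Equiv.prodComm ℕ ℕ).tsum_eq, moment]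
  refine tsum_congr fun ⟨m, n⟩ => congrArg ENNReal.ofReal ?_
  have hchoose : (2 * (n + m)).choose (2 * n) = (2 * (m + n)).choose (2 * m) := by
    rw [add_comm, mul_add, Nat.choose_symm_add]
  simp only [momentTerm, evenBinomTerm, Equiv.prodComm_apply, Prod.fst_swap, Prod.snd_swap, hchoose,
    add_comm (n : ℝ), sub_right_comm 1 X Y]
  ring

lemma MomentBounded.swap (h : MomentBounded s A B) : MomentBounded s B A := by
  obtain ⟨C, hC⟩ := h
  exact ⟨C, fun X Y hX hY hXY =>
    (moment_swap s B A X Y).trans_le (hC Y X hY hX (by rwa [add_comm]))⟩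

lemma momentTerm_add_two (hX : 0 ≤ X) (hXY : X + Y < 1) (p : ℕ × ℕ) :
    momentTerm s (A + 2) B X Y p =
      ((1 - X - Y) / (1 - Y)) ^ 2 * (p.1 + 1) ^ 2 * momentTerm s A B X Y p := by
  have hδ : 0 < 1 - X - Y := by linarith
  have hY' : 0 < 1 - Y := by linarith
  simp only [momentTerm]
  rw [Real.rpow_add (by positivity), Real.rpow_two]
  ring

/-- The bounded factor relating consecutive moment terms; see `momentTerm_succ`. -/
noncomputable def shiftFactor (s A : ℝ) (m n : ℕ) : ℝ :=
  (2 * (m + n) + 1) / (m + n + 1) * ((m + 1) / (2 * m + 1)) *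
    ((m + n + 2) / (m + n + 1)) ^ (s - 1) * ((m + 2) / (m + 1)) ^ (A + 2)

lemma two_rpow_neg_abs_le_rpow {x : ℝ} (h1 : 1 ≤ x) (h2 : x ≤ 2) (r : ℝ) :
    2 ^ (-|r|) ≤ x ^ r := by
  rw [Real.rpow_neg zero_le_two, inv_le_comm₀ (by positivity) (by positivity),
    ← Real.rpow_neg (by positivity)]
  exact (Real.rpow_le_rpow_of_exponent_le h1 (neg_le_abs r)).trans
    (Real.rpow_le_rpow (by positivity) h2 (abs_nonneg r))

lemma rpow_le_two_rpow_abs {x : ℝ} (h1 : 1 ≤ x) (h2 : x ≤ 2) (r : ℝ) : x ^ r ≤ 2 ^ |r| :=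
  (Real.rpow_le_rpow_of_exponent_le h1 (le_abs_self r)).trans
    (Real.rpow_le_rpow (by positivity) h2 (abs_nonneg r))

lemma shiftFactor_bounds (s A : ℝ) (m n : ℕ) :
    (2 * 2 ^ |s - 1| * 2 ^ |A + 2|)⁻¹ ≤ shiftFactor s A m n ∧
      shiftFactor s A m n ≤ 2 * 2 ^ |s - 1| * 2 ^ |A + 2| := by
  have hm : (0 : ℝ) ≤ m := m.cast_nonneg
  have hn : (0 : ℝ) ≤ n := n.cast_nonneg
  have hN₁ : (1 : ℝ) ≤ (2 * (m + n) + 1) / (m + n + 1) := by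
    rw [one_le_div (by positivity)]; linarith
  have hN₂ : (2 * (m + n) + 1) / (m + n + 1) ≤ (2 : ℝ) := by
    rw [div_le_iff₀ (by positivity)]; linarith
  have hm₁ : (2⁻¹ : ℝ) ≤ (m + 1) / (2 * m + 1) := by
    rw [le_div_iff₀ (by positivity)]; linarith
  have hm₂ : (m + 1) / (2 * m + 1) ≤ (1 : ℝ) := by
    rw [div_le_one (by positivity)]; linarith
  have hratio {x : ℝ} (hx : 0 ≤ x) : 1 ≤ (x + 2) / (x + 1) ∧ (x + 2) / (x + 1) ≤ 2 := by
    rw [one_le_div (by positivity), div_le_iff₀ (by positivity)]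
    constructor <;> linarith
  obtain ⟨hM₁, hM₂⟩ := hratio hm
  obtain ⟨hS₁, hS₂⟩ := hratio (add_nonneg hm hn)
  constructor
  · calc (2 * 2 ^ |s - 1| * 2 ^ |A + 2| : ℝ)⁻¹
        = 1 * 2⁻¹ * 2 ^ (-|s - 1|) * 2 ^ (-|A + 2|) := by
          rw [Real.rpow_neg zero_le_two, Real.rpow_neg zero_le_two, mul_inv, mul_inv, one_mul]
      _ ≤ shiftFactor s A m n := by
          unfold shiftFactor
          gcongr
          exacts [two_rpow_neg_abs_le_rpow hS₁ hS₂ _, two_rpow_neg_abs_le_rpow hM₁ hM₂ _]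
  · calc shiftFactor s A m n ≤ 2 * 1 * 2 ^ |s - 1| * 2 ^ |A + 2| := by
          unfold shiftFactor
          gcongr
          exacts [rpow_le_two_rpow_abs hS₁ hS₂ _, rpow_le_two_rpow_abs hM₁ hM₂ _]
      _ = 2 * 2 ^ |s - 1| * 2 ^ |A + 2| := by rw [mul_one]

lemma choose_two_mul_succ (m n : ℕ) :
    ((2 * (m + 1 + n)).choose (2 * (m + 1)) : ℝ) = (2 * (m + n)).choose (2 * m) *
      ((2 * (m + n) + 1) / (m + n + 1) * ((m + 1) / (2 * m + 1)) *
        (m + n + 1) ^ 2 / (m + 1) ^ 2) := by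
  have hodd := Nat.add_one_mul_choose_eq (2 * (m + n)) (2 * m)
  have heven := Nat.add_one_mul_choose_eq (2 * (m + n) + 1) (2 * m + 1)
  rw [show 2 * (m + n) + 1 + 1 = 2 * (m + 1 + n) by ring,
    show 2 * m + 1 + 1 = 2 * (m + 1) by ring] at heven
  have hodd' := congrArg (Nat.cast (R := ℝ)) hodd
  have heven' := congrArg (Nat.cast (R := ℝ)) heven
  push_cast at hodd' heven'
  field_simp
  linear_combination (-(m + n + 1) : ℝ) * hodd' - (2 * m + 1 : ℝ) / 2 * heven'

lemma momentTerm_succ (hX : 0 ≤ X) (hXY : X + Y < 1) (m n : ℕ) :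
    momentTerm s (A + 2) B X Y (m + 1, n) =
      (X / (1 - Y)) ^ 2 * shiftFactor s A m n * momentTerm (s + 2) A B X Y (m, n) := by
  have hδ : 0 < 1 - X - Y := by linarith
  have hY' : 0 < 1 - Y := by linarith
  have hs : ((1 - X - Y) * (m + n + 2)) ^ s = ((1 - X - Y) * (m + n + 1)) ^ (s + 2) *
      ((m + n + 2) / (m + n + 1)) ^ (s - 1) * (m + n + 2) / (m + n + 1) ^ 3 / (1 - X - Y) ^ 2 := by
    rw [Real.mul_rpow hδ.le (by positivity), Real.mul_rpow hδ.le (by positivity),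
      Real.rpow_add hδ, Real.rpow_add (by positivity), Real.div_rpow (by positivity)
      (by positivity), Real.rpow_sub_one (by positivity), Real.rpow_sub_one (by positivity),
      Real.rpow_two, Real.rpow_two]
    field_simp
  have hA : ((1 - X - Y) / (1 - Y) * (m + 2)) ^ (A + 2) = ((1 - X - Y) / (1 - Y) * (m + 1)) ^ A *
      ((m + 2) / (m + 1)) ^ (A + 2) * ((1 - X - Y) / (1 - Y)) ^ 2 * (m + 1) ^ 2 := by
    rw [show (1 - X - Y) / (1 - Y) * (m + 2 : ℝ) =
        (1 - X - Y) / (1 - Y) * (m + 1) * ((m + 2) / (m + 1)) by field_simp,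
      Real.mul_rpow (by positivity) (by positivity), Real.rpow_add (by positivity), Real.rpow_two]
    ring
  simp only [momentTerm, evenBinomTerm, shiftFactor, choose_two_mul_succ]
  push_cast
  rw [show (m + 1 + n + 1 : ℝ) = m + n + 2 by ring, show (m + 1 + 1 : ℝ) = m + 2 by ring, hs, hA]
  field_simp
  ring

lemma momentTerm_succ_le (s A B : ℝ) (hX : 0 ≤ X) (hY : 0 ≤ Y) (hXY : X + Y < 1) (m n : ℕ) :
    momentTerm s (A + 2) B X Y (m + 1, n) ≤
      2 * 2 ^ |s - 1| * 2 ^ |A + 2| * momentTerm (s + 2) A B X Y (m, n) := by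
  have hterm := momentTerm_nonneg (s := s + 2) (A := A) (B := B) hX hY hXY (m, n)
  have hX' : X / (1 - Y) ≤ 1 := (div_le_one (by linarith)).2 (by linarith)
  have hX₀ : 0 ≤ X / (1 - Y) := div_nonneg hX (by linarith)
  have hpow : (X / (1 - Y)) ^ 2 ≤ 1 := pow_le_one₀ hX₀ hX'
  obtain ⟨hlow, hupp⟩ := shiftFactor_bounds s A m n
  have hshift : 0 ≤ shiftFactor s A m n := le_trans (by positivity) hlow
  rw [momentTerm_succ hX hXY]
  exact mul_le_mul_of_nonneg_right ((mul_le_of_le_one_left hshift hpow).trans hupp) hterm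

lemma sq_mul_momentTerm_le (s A B : ℝ) (hX : 0 ≤ X) (hY : 0 ≤ Y) (hXY : X + Y < 1) (m n : ℕ) :
    (X / (1 - Y)) ^ 2 * momentTerm (s + 2) A B X Y (m, n) ≤
      2 * 2 ^ |s - 1| * 2 ^ |A + 2| * momentTerm s (A + 2) B X Y (m + 1, n) := by
  have hterm := momentTerm_nonneg (s := s + 2) (A := A) (B := B) hX hY hXY (m, n)
  have hshift := (inv_le_iff_one_le_mul₀' (by positivity)).1 (shiftFactor_bounds s A m n).1
  calc (X / (1 - Y)) ^ 2 * momentTerm (s + 2) A B X Y (m, n)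
      ≤ (X / (1 - Y)) ^ 2 * momentTerm (s + 2) A B X Y (m, n) *
          (2 * 2 ^ |s - 1| * 2 ^ |A + 2| * shiftFactor s A m n) :=
        le_mul_of_one_le_right (by positivity) hshift
    _ = 2 * 2 ^ |s - 1| * 2 ^ |A + 2| * momentTerm s (A + 2) B X Y (m + 1, n) := by
        rw [momentTerm_succ hX hXY]
        ring

lemma tsum_prod_eq_zero_add (f : ℕ × ℕ → ℝ≥0∞) :
    ∑' p, f p = ∑' n, f (0, n) + ∑' p : ℕ × ℕ, f (p.1 + 1, p.2) := by
  rw [ENNReal.tsum_prod', tsum_eq_zero_add' ENNReal.summable, ENNReal.tsum_prod']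

lemma MomentBounded.add_two (h₀ : MomentBounded s A B) (h₂ : MomentBounded (s + 2) A B) :
    MomentBounded s (A + 2) B := by
  obtain ⟨C₀, hC₀⟩ := h₀
  obtain ⟨C₂, hC₂⟩ := h₂
  set D : ℝ := 2 * 2 ^ |s - 1| * 2 ^ |A + 2|
  have hD₀ : 0 ≤ D := by positivity
  refine ⟨C₀ + D.toNNReal * C₂, fun X Y hX hY hXY => ?_⟩
  have hrow (n : ℕ) : momentTerm s (A + 2) B X Y (0, n) ≤ momentTerm s A B X Y (0, n) := by
    have hδ : (1 - X - Y) / (1 - Y) ≤ 1 := (div_le_one (by linarith)).2 (by linarith)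
    have hδ₀ : 0 ≤ (1 - X - Y) / (1 - Y) := div_nonneg (by linarith) (by linarith)
    rw [momentTerm_add_two hX hXY]
    simpa using mul_le_of_le_one_left (momentTerm_nonneg hX hY hXY (0, n)) (pow_le_one₀ hδ₀ hδ)
  calc moment s (A + 2) B X Y
      = ∑' n, ENNReal.ofReal (momentTerm s (A + 2) B X Y (0, n)) +
          ∑' p : ℕ × ℕ, ENNReal.ofReal (momentTerm s (A + 2) B X Y (p.1 + 1, p.2)) :=
        tsum_prod_eq_zero_add _
    _ ≤ ∑' n, ENNReal.ofReal (momentTerm s A B X Y (0, n)) +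
          ∑' p, ENNReal.ofReal D * ENNReal.ofReal (momentTerm (s + 2) A B X Y p) := by
        gcongr with n p
        · exact hrow n
        · rw [← ENNReal.ofReal_mul hD₀]
          exact ENNReal.ofReal_le_ofReal (momentTerm_succ_le s A B hX hY hXY p.1 p.2)
    _ ≤ moment s A B X Y + ENNReal.ofReal D * moment (s + 2) A B X Y := by
        rw [ENNReal.tsum_mul_left]
        refine add_le_add ?_ le_rfl
        exact ENNReal.tsum_comp_le_tsum_of_injective (Prod.mk_right_injective 0) _
    _ ≤ (C₀ + D.toNNReal * C₂ : ℝ≥0) := by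
        push_cast
        gcongr
        exacts [hC₀ X Y hX hY hXY, le_rfl, hC₂ X Y hX hY hXY]

lemma momentTerm_le_add (s A B : ℝ) (hX : 0 ≤ X) (hY : 0 ≤ Y) (hXY : X + Y < 1) (p : ℕ × ℕ) :
    momentTerm (s + 2) A B X Y p ≤ 2 * momentTerm (s + 2) (A + 2) B X Y p +
      2 * (2 * 2 ^ |s - 1| * 2 ^ |A + 2|) * momentTerm s (A + 2) B X Y (p.1 + 1, p.2) := by
  set x := X / (1 - Y) with hx
  set y := (1 - X - Y) / (1 - Y) with hy
  have hxy : x + y = 1 := by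
    have hY' : 1 - Y ≠ 0 := by linarith
    rw [hx, hy, ← add_div, div_eq_one_iff_eq hY']
    ring
  have hterm := momentTerm_nonneg (s := s + 2) (A := A) (B := B) hX hY hXY p
  have hsq : 1 ≤ 2 * (y ^ 2 * (p.1 + 1) ^ 2) + 2 * x ^ 2 := by
    have hp : (1 : ℝ) ≤ (p.1 + 1) ^ 2 := one_le_pow₀ (by simp)
    nlinarith [sq_nonneg (x - y), mul_le_mul_of_nonneg_left hp (sq_nonneg y)]
  calc momentTerm (s + 2) A B X Y p
      ≤ (2 * (y ^ 2 * (p.1 + 1) ^ 2) + 2 * x ^ 2) * momentTerm (s + 2) A B X Y p :=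
        le_mul_of_one_le_left hterm hsq
    _ = 2 * momentTerm (s + 2) (A + 2) B X Y p + 2 * (x ^ 2 * momentTerm (s + 2) A B X Y p) := by
        rw [momentTerm_add_two hX hXY]
        ring
    _ ≤ _ := by
        rw [mul_assoc 2 (2 * 2 ^ |s - 1| * 2 ^ |A + 2|)]
        gcongr 2 * _ + 2 * ?_
        exact sq_mul_momentTerm_le s A B hX hY hXY p.1 p.2

lemma MomentBounded.of_add_two (h₀ : MomentBounded s (A + 2) B)
    (h₂ : MomentBounded (s + 2) (A + 2) B) : MomentBounded (s + 2) A B := by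
  obtain ⟨C₀, hC₀⟩ := h₀
  obtain ⟨C₂, hC₂⟩ := h₂
  set D : ℝ := 2 * (2 * 2 ^ |s - 1| * 2 ^ |A + 2|)
  have hD₀ : 0 ≤ D := by positivity
  refine ⟨2 * C₂ + D.toNNReal * C₀, fun X Y hX hY hXY => ?_⟩
  have hinj : Function.Injective fun p : ℕ × ℕ => (p.1 + 1, p.2) := fun p q h => by
    simpa [Prod.ext_iff] using h
  calc moment (s + 2) A B X Y
      ≤ ∑' p : ℕ × ℕ, (ENNReal.ofReal 2 * ENNReal.ofReal (momentTerm (s + 2) (A + 2) B X Y p) +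
          ENNReal.ofReal D * ENNReal.ofReal (momentTerm s (A + 2) B X Y (p.1 + 1, p.2))) := by
        refine ENNReal.tsum_le_tsum fun p => ?_
        have h₀ := momentTerm_nonneg (s := s) (A := A + 2) (B := B) hX hY hXY (p.1 + 1, p.2)
        have h₂ := momentTerm_nonneg (s := s + 2) (A := A + 2) (B := B) hX hY hXY p
        rw [← ENNReal.ofReal_mul zero_le_two, ← ENNReal.ofReal_mul hD₀,
          ← ENNReal.ofReal_add (by positivity) (by positivity)]
        exact ENNReal.ofReal_le_ofReal (momentTerm_le_add s A B hX hY hXY p)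
    _ ≤ ENNReal.ofReal 2 * moment (s + 2) (A + 2) B X Y +
          ENNReal.ofReal D * moment s (A + 2) B X Y := by
        rw [ENNReal.tsum_add, ENNReal.tsum_mul_left, ENNReal.tsum_mul_left, moment, moment]
        gcongr _ + _ * ?_
        exact ENNReal.tsum_comp_le_tsum_of_injective hinj
          fun p => ENNReal.ofReal (momentTerm s (A + 2) B X Y p)
    _ ≤ (2 * C₂ + D.toNNReal * C₀ : ℝ≥0) := by
        rw [ENNReal.ofReal_ofNat]
        push_cast
        gcongr
        exacts [hC₂ X Y hX hY hXY, le_rfl, hC₀ X Y hX hY hXY]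

lemma exists_tsum_ofReal_le_of_isBigO_top {ι : Type*} {f g : ι → ℝ} (hg : ∀ i, 0 ≤ g i)
    (h : f =O[⊤] g) : ∃ C : ℝ≥0, ∀ w : ι → ℝ, (∀ i, 0 ≤ w i) →
      ∑' i, ENNReal.ofReal (f i * w i) ≤ C * ∑' i, ENNReal.ofReal (g i * w i) := by
  obtain ⟨C, hC⟩ := isBigO_top.1 h
  refine ⟨C.toNNReal, fun w hw => ?_⟩
  rw [← ENNReal.tsum_mul_left]
  refine ENNReal.tsum_le_tsum fun i => ?_
  change _ ≤ ENNReal.ofReal C * _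
  rw [← ENNReal.ofReal_mul' (mul_nonneg (hg i) (hw i)), ← mul_assoc]
  have hfg : f i ≤ C * g i := by
    simpa only [Real.norm_of_nonneg (hg i)] using (le_abs_self _).trans (hC i)
  exact ENNReal.ofReal_le_ofReal (mul_le_mul_of_nonneg_right hfg (hw i))

lemma sum_range_two_mul_add_one {M : Type*} [AddCommMonoid M] (f : ℕ → M) (n : ℕ) :
    ∑ j ∈ Finset.range (2 * n + 1), f j =
      ∑ m ∈ Finset.range (n + 1), f (2 * m) + ∑ m ∈ Finset.range n, f (2 * m + 1) := by
  induction n with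
  | zero => simp
  | succ n ih =>
    rw [show 2 * (n + 1) + 1 = 2 * n + 1 + 1 + 1 by ring, Finset.sum_range_succ,
      Finset.sum_range_succ, ih, Finset.sum_range_succ (fun m => f (2 * m)) (n + 1),
      Finset.sum_range_succ (fun m => f (2 * m + 1)) n, mul_add_one]
    abel

lemma sum_antidiagonal_evenBinomTerm (X Y : ℝ) (n : ℕ) :
    ∑ p ∈ Finset.HasAntidiagonal.antidiagonal n, evenBinomTerm X Y p =
      ((X + Y) ^ (2 * n) + (-X + Y) ^ (2 * n)) / 2 := by
  have hterm : ∀ m ∈ Finset.range (n + 1), evenBinomTerm X Y (m, n - m) =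
      X ^ (2 * m) * Y ^ (2 * n - 2 * m) * (2 * n).choose (2 * m) := fun m hm => by
    rw [evenBinomTerm, Nat.add_sub_of_le (Finset.mem_range_succ_iff.1 hm), Nat.mul_sub]
    ring
  rw [Finset.Nat.sum_antidiagonal_eq_sum_range_succ_mk, Finset.sum_congr rfl hterm,
    add_pow, add_pow, sum_range_two_mul_add_one, sum_range_two_mul_add_one]
  simp only [pow_succ (-X), pow_succ X, (even_two_mul _).neg_pow, mul_neg, neg_mul,
    Finset.sum_neg_distrib]
  ring

lemma tsum_prod_eq_tsum_sum_antidiagonal (f : ℕ × ℕ → ℝ≥0∞) :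
    ∑' p, f p = ∑' n, ∑ p ∈ Finset.HasAntidiagonal.antidiagonal n, f p := by
  rw [← Finset.HasAntidiagonal.sigmaAntidiagonalEquivProd.tsum_eq, ENNReal.tsum_sigma']
  exact tsum_congr fun n => (tsum_fintype _).trans (Finset.sum_coe_sort _ f)

lemma moment_zero_zero (s : ℝ) (hX : 0 ≤ X) (hY : 0 ≤ Y) (hXY : X + Y < 1) :
    moment s 0 0 X Y = ∑' n : ℕ, ENNReal.ofReal ((n + 1 : ℝ) ^ (s - 1) *
      ((1 - X - Y) ^ s * (((X + Y) ^ (2 * n) + (-X + Y) ^ (2 * n)) / 2))) := by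
  rw [moment, tsum_prod_eq_tsum_sum_antidiagonal]
  refine tsum_congr fun n => ?_
  rw [← ENNReal.ofReal_sum_of_nonneg fun p _ => momentTerm_nonneg hX hY hXY p,
    ← sum_antidiagonal_evenBinomTerm, Finset.mul_sum, Finset.mul_sum]
  refine congrArg ENNReal.ofReal (Finset.sum_congr rfl fun p hp => ?_)
  have hN : (p.1 + p.2 + 1 : ℝ) = n + 1 := by
    rw [← Finset.HasAntidiagonal.mem_antidiagonal.1 hp, Nat.cast_add]
  rw [momentTerm, hN, Real.mul_rpow (by linarith) (by positivity),
    Real.rpow_sub_one (by positivity), Real.rpow_zero, Real.rpow_zero]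
  ring

lemma tsum_ofReal_ascPochhammer_mul_pow (hs : 0 < s) (hX : 0 ≤ X) (hY : 0 ≤ Y)
    (hXY : X + Y < 1) :
    ∑' n : ℕ, ENNReal.ofReal ((ascPochhammer ℝ n).eval s / n.factorial *
      ((1 - X - Y) ^ s * (X + Y) ^ (2 * n))) = ENNReal.ofReal ((1 + X + Y) ^ (-s)) := by
  have hδ : 0 < 1 - X - Y := by linarith
  have hr : |(X + Y) ^ 2| < 1 := by
    rw [abs_of_nonneg (sq_nonneg _)]
    exact pow_lt_one₀ (by positivity) hXY two_ne_zero
  have hsum := (hasSum_ascPochhammer_div_factorial s hr).mul_left ((1 - X - Y) ^ s)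
  have hval : (1 - X - Y) ^ s * (1 - (X + Y) ^ 2) ^ (-s) = (1 + X + Y) ^ (-s) := by
    rw [show 1 - (X + Y) ^ 2 = (1 - X - Y) * (1 + X + Y) by ring,
      Real.mul_rpow hδ.le (by positivity), ← mul_assoc, ← Real.rpow_add hδ, add_neg_cancel,
      Real.rpow_zero, one_mul]
  rw [← hval, ← hsum.tsum_eq, ENNReal.ofReal_tsum_of_nonneg (fun n => ?_) hsum.summable]
  · refine tsum_congr fun n => congrArg ENNReal.ofReal ?_
    rw [pow_mul]
    ring
  · have := ascPochhammer_pos n s hs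
    positivity

lemma tsum_ofReal_ascPochhammer_mul_even_le_one (hs : 0 < s) (hX : 0 ≤ X) (hY : 0 ≤ Y)
    (hXY : X + Y < 1) :
    ∑' n : ℕ, ENNReal.ofReal ((ascPochhammer ℝ n).eval s / n.factorial *
      ((1 - X - Y) ^ s * (((X + Y) ^ (2 * n) + (-X + Y) ^ (2 * n)) / 2))) ≤ 1 := by
  have hδ : 0 < 1 - X - Y := by linarith
  calc _ ≤ ENNReal.ofReal ((1 + X + Y) ^ (-s)) := by
        rw [← tsum_ofReal_ascPochhammer_mul_pow hs hX hY hXY]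
        refine ENNReal.tsum_le_tsum fun n => ENNReal.ofReal_le_ofReal ?_
        have hn := ascPochhammer_pos n s hs
        have hpow : (-X + Y) ^ (2 * n) ≤ (X + Y) ^ (2 * n) := by
          rw [pow_mul, pow_mul]
          gcongr ?_ ^ n
          nlinarith
        gcongr
        linarith
    _ ≤ 1 := by
        rw [← ENNReal.ofReal_one]
        exact ENNReal.ofReal_le_ofReal
          (Real.rpow_le_one_of_one_le_of_nonpos (by linarith) (by linarith))

lemma one_le_mul_tsum_ofReal_ascPochhammer_mul_even (hs : 0 < s) (hX : 0 ≤ X) (hY : 0 ≤ Y)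
    (hXY : X + Y < 1) :
    1 ≤ ENNReal.ofReal (2 ^ s * 2) *
      ∑' n : ℕ, ENNReal.ofReal ((ascPochhammer ℝ n).eval s / n.factorial *
        ((1 - X - Y) ^ s * (((X + Y) ^ (2 * n) + (-X + Y) ^ (2 * n)) / 2))) := by
  have hδ : 0 < 1 - X - Y := by linarith
  calc (1 : ℝ≥0∞) ≤ ENNReal.ofReal (2 ^ s) * ENNReal.ofReal ((1 + X + Y) ^ (-s)) := by
        rw [← ENNReal.ofReal_one, ← ENNReal.ofReal_mul (by positivity)]
        refine ENNReal.ofReal_le_ofReal ?_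
        rw [Real.rpow_neg (by positivity), ← div_eq_mul_inv, one_le_div (by positivity)]
        exact Real.rpow_le_rpow (by positivity) (by linarith) hs.le
    _ ≤ _ := by
        rw [← tsum_ofReal_ascPochhammer_mul_pow hs hX hY hXY,
          ENNReal.ofReal_mul (by positivity), mul_assoc]
        gcongr
        rw [← ENNReal.tsum_mul_left]
        refine ENNReal.tsum_le_tsum fun n => ?_
        have hn := ascPochhammer_pos n s hs
        rw [← ENNReal.ofReal_mul zero_le_two, mul_left_comm 2, mul_left_comm 2,
          mul_div_cancel₀ _ two_ne_zero]
        refine ENNReal.ofReal_le_ofReal ?_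
        gcongr
        exact le_add_of_nonneg_right ((even_two_mul n).pow_nonneg _)

/-- The moment of orders `(s, A, B)` is bounded away from `0` uniformly on the triangle of
convergence. -/
def MomentBoundedBelow (s A B : ℝ) : Prop :=
  ∃ C : ℝ≥0, ∀ X Y : ℝ, 0 ≤ X → 0 ≤ Y → X + Y < 1 → 1 ≤ C * moment s A B X Y

lemma isTheta_ascPochhammer_div_factorial (hs : 0 < s) :
    (fun n : ℕ => (ascPochhammer ℝ n).eval s / n.factorial) =Θ[⊤]
      fun n : ℕ => (n + 1 : ℝ) ^ (s - 1) := by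
  simpa only [ascPochhammer_eval_one] using isTheta_ascPochhammer_div hs one_pos

lemma momentBounded_zero_zero (hs : 0 < s) : MomentBounded s 0 0 := by
  obtain ⟨C, hC⟩ := exists_tsum_ofReal_le_of_isBigO_top
    (fun n => div_nonneg (ascPochhammer_pos n s hs).le (Nat.cast_nonneg n.factorial))
    (isTheta_ascPochhammer_div_factorial hs).2
  refine ⟨C, fun X Y hX hY hXY => ?_⟩
  rw [moment_zero_zero s hX hY hXY]
  have hδ : 0 < 1 - X - Y := by linarith
  refine (hC _ fun n => ?_).trans (mul_le_of_le_one_right'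
    (tsum_ofReal_ascPochhammer_mul_even_le_one hs hX hY hXY))
  have heven := (even_two_mul n).pow_nonneg (-X + Y)
  positivity

lemma momentBoundedBelow_zero_zero (hs : 0 < s) : MomentBoundedBelow s 0 0 := by
  obtain ⟨C, hC⟩ := exists_tsum_ofReal_le_of_isBigO_top
    (fun n => by positivity) (isTheta_ascPochhammer_div_factorial hs).1
  refine ⟨(2 ^ s * 2 : ℝ).toNNReal * C, fun X Y hX hY hXY => ?_⟩
  have hδ : 0 < 1 - X - Y := by linarith
  rw [moment_zero_zero s hX hY hXY, ENNReal.coe_mul, mul_assoc]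
  refine (one_le_mul_tsum_ofReal_ascPochhammer_mul_even hs hX hY hXY).trans
    (mul_le_mul_right (hC _ fun n => ?_) _)
  have heven := (even_two_mul n).pow_nonneg (-X + Y)
  positivity

lemma MomentBounded.of_zero {σ : ℝ} (h : ∀ s, σ < s → MomentBounded s 0 B)
    (hs : σ + max (-A) 0 < s) : MomentBounded s A B := by
  have hup (i : ℕ) : ∀ s, σ < s → MomentBounded s (2 * i) B := by
    induction i with
    | zero => simpa using h
    | succ i ih =>
      intro s hs
      rw [Nat.cast_succ, mul_add_one]
      exact (ih s hs).add_two (ih (s + 2) (by linarith))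
  have hdown (i : ℕ) : ∀ s, σ + 2 * i < s → MomentBounded s (-(2 * i)) B := by
    induction i with
    | zero => simpa using h
    | succ i ih =>
      intro s hs
      rw [Nat.cast_succ] at hs ⊢
      have h₀ := ih (s - 2) (by linarith)
      have h₂ := ih s (by linarith)
      rw [show -(2 * i : ℝ) = -(2 * (i + 1)) + 2 by ring] at h₀ h₂
      simpa using h₀.of_add_two (by simpa using h₂)
  obtain ⟨i, hi⟩ := exists_nat_gt |A|
  have hi₀ : (0 : ℝ) < i := (abs_nonneg A).trans_lt hi
  set v := |A| / (2 * i) with hv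
  have hv₀ : 0 ≤ v := by positivity
  have hv₁ : 0 ≤ 1 - v := sub_nonneg.2 ((div_le_one (by positivity)).2 (by linarith))
  have hvA : v * (2 * i) = |A| := div_mul_cancel₀ _ (by positivity)
  rcases le_total 0 A with hA | hA
  · rw [max_eq_right (by linarith), add_zero] at hs
    rw [abs_of_nonneg hA] at hvA
    convert (h s hs).interpolate (hup i s hs) hv₁ hv₀ (by ring) using 1 <;> linarith
  · rw [max_eq_left (by linarith)] at hs
    rw [abs_of_nonpos hA] at hvA
    convert (h (s + A) (by linarith)).interpolate (hdown i (s + A + 2 * i) (by linarith))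
      hv₁ hv₀ (by ring) using 1 <;> linarith

lemma momentBounded (hs : max (-A) 0 + max (-B) 0 < s) : MomentBounded s A B :=
  MomentBounded.of_zero (σ := max (-B) 0) (fun _ ht => MomentBounded.swap
    (MomentBounded.of_zero (σ := 0) (fun _ => momentBounded_zero_zero) (by simpa using ht)))
    (by linarith)

-- The midpoint of `(s, A, B)` and `(s₁, -A, -B)` is a pure moment in `m + n + 1`. By log-convexity
-- its lower bound and the upper bound at `(s₁, -A, -B)` give the lower bound at `(s, A, B)`.
lemma momentBoundedBelow (s A B : ℝ) : MomentBoundedBelow s A B := by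
  set s₁ := max A 0 + max B 0 + 1 + |s|
  have hs₁' : max A 0 + max B 0 < s₁ := by linarith [abs_nonneg s]
  have hmid : 0 < 1 / 2 * s + 1 / 2 * s₁ := by
    linarith [neg_abs_le s, le_max_right A 0, le_max_right B 0]
  obtain ⟨C₁, hC₁⟩ := momentBounded (s := s₁) (A := -A) (B := -B) (by simpa using hs₁')
  obtain ⟨C, hC⟩ := momentBoundedBelow_zero_zero hmid
  refine ⟨C ^ 2 * C₁, fun X Y hX hY hXY => ?_⟩
  have hconvex := moment_interpolate_le (s₀ := s) (s₁ := s₁) (A₀ := A) (A₁ := -A) (B₀ := B)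
    (B₁ := -B) hX hY hXY one_half_pos.le one_half_pos.le (add_halves 1)
  simp only [mul_neg, add_neg_cancel] at hconvex
  have hsq (x : ℝ≥0∞) : (x ^ (1 / 2 : ℝ)) ^ 2 = x := by
    rw [← ENNReal.rpow_mul_natCast]; norm_num
  calc (1 : ℝ≥0∞) ≤ (C * moment (1 / 2 * s + 1 / 2 * s₁) 0 0 X Y) ^ 2 :=
        one_le_pow₀ (hC X Y hX hY hXY)
    _ ≤ (C * (moment s A B X Y ^ (1 / 2 : ℝ) * C₁ ^ (1 / 2 : ℝ))) ^ 2 := by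
        gcongr
        refine hconvex.trans ?_
        gcongr
        exact hC₁ X Y hX hY hXY
    _ = (C ^ 2 * C₁ : ℝ≥0) * moment s A B X Y := by
        rw [mul_pow, mul_pow, hsq, hsq]
        push_cast
        ring

end Moments

section AppellFunction

/-- The region `√x + √y < 1` on which the series `F4 a₁ a₂ b₁ b₂ x y` is considered, in the
coordinates `X = √x` and `Y = √y`. -/
def convergenceTriangle : Set (ℝ × ℝ) := {z | 0 ≤ z.1 ∧ 0 ≤ z.2 ∧ z.1 + z.2 < 1}

/-- The factor which normalises the moment of orders `(s, A, B)`; see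
`momentTerm_eq_mul_div_momentScale`. -/
noncomputable def momentScale (s A B X Y : ℝ) : ℝ :=
  (1 - X - Y) ^ (-(s + A + B)) * (1 - Y) ^ A * (1 - X) ^ B

variable {s A B a₁ a₂ b₁ b₂ X Y : ℝ}

lemma momentScale_pos (hX : 0 ≤ X) (hY : 0 ≤ Y) (hXY : X + Y < 1) :
    0 < momentScale s A B X Y := by
  have hδ : 0 < 1 - X - Y := by linarith
  have hX' : 0 < 1 - X := by linarith
  have hY' : 0 < 1 - Y := by linarith
  rw [momentScale]
  positivity

lemma momentTerm_eq_mul_div_momentScale (hX : 0 ≤ X) (hY : 0 ≤ Y) (hXY : X + Y < 1) (p : ℕ × ℕ) :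
    momentTerm s A B X Y p = ((2 * (p.1 + p.2)).choose (2 * p.1) : ℝ) *
      (p.1 + p.2 + 1 : ℝ) ^ (s - 1) * (p.1 + 1 : ℝ) ^ A * (p.2 + 1 : ℝ) ^ B *
      (X ^ (2 * p.1) * Y ^ (2 * p.2) / momentScale s A B X Y) := by
  have hδ : 0 < 1 - X - Y := by linarith
  have hX' : 0 < 1 - X := by linarith
  have hY' : 0 < 1 - Y := by linarith
  rw [momentTerm, evenBinomTerm, momentScale, Real.mul_rpow (by positivity) (by positivity),
    Real.mul_rpow (by positivity) (by positivity), Real.mul_rpow (by positivity) (by positivity),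
    Real.div_rpow hδ.le hY'.le, Real.div_rpow hδ.le hX'.le, Real.rpow_neg hδ.le,
    Real.rpow_add hδ, Real.rpow_add hδ, Real.rpow_sub_one (by positivity)]
  field_simp

lemma F4_sq_sq_eq_tsum (a₁ a₂ b₁ b₂ X Y : ℝ) :
    F4 a₁ a₂ b₁ b₂ (X ^ 2) (Y ^ 2) =
      ∑' p, appellCoeff a₁ a₂ b₁ b₂ p * (X ^ (2 * p.1) * Y ^ (2 * p.2)) := by
  simp only [F4, appellCoeff, pow_mul, mul_assoc]

/-- The series `F4 a₁ a₂ b₁ b₂ (X ^ 2) (Y ^ 2)`, normalised by the scale of the moment with which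
its terms are comparable and summed in `[0, ∞]`. -/
noncomputable def normalizedF4 (a₁ a₂ b₁ b₂ X Y : ℝ) : ℝ≥0∞ :=
  ∑' p, ENNReal.ofReal (appellCoeff a₁ a₂ b₁ b₂ p * (X ^ (2 * p.1) * Y ^ (2 * p.2) /
    momentScale (a₁ + a₂ - 1 / 2) (1 / 2 - b₁) (1 / 2 - b₂) X Y))

lemma normalizedF4_eq_ofReal (ha₁ : 0 < a₁) (ha₂ : 0 < a₂) (hb₁ : 0 < b₁) (hb₂ : 0 < b₂)
    (hX : 0 ≤ X) (hY : 0 ≤ Y) (hXY : X + Y < 1) (hfin : normalizedF4 a₁ a₂ b₁ b₂ X Y ≠ ∞) :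
    normalizedF4 a₁ a₂ b₁ b₂ X Y = ENNReal.ofReal (F4 a₁ a₂ b₁ b₂ (X ^ 2) (Y ^ 2) /
      momentScale (a₁ + a₂ - 1 / 2) (1 / 2 - b₁) (1 / 2 - b₂) X Y) := by
  have hscale : 0 < momentScale (a₁ + a₂ - 1 / 2) (1 / 2 - b₁) (1 / 2 - b₂) X Y :=
    momentScale_pos hX hY hXY
  rw [← ENNReal.ofReal_toReal hfin, normalizedF4,
    ENNReal.tsum_toReal_eq fun _ => ENNReal.ofReal_ne_top, F4_sq_sq_eq_tsum, ← tsum_div_const]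
  refine congrArg _ (tsum_congr fun p => ?_)
  have hp := appellCoeff_pos ha₁ ha₂ hb₁ hb₂ p
  have hweight : 0 ≤ X ^ (2 * p.1) * Y ^ (2 * p.2) := by positivity
  rw [ENNReal.toReal_ofReal (mul_nonneg hp.le (div_nonneg hweight hscale.le)), ← mul_div_assoc]

lemma exists_normalizedF4_bounds (ha₁ : 0 < a₁) (ha₂ : 0 < a₂) (hb₁ : 0 < b₁) (hb₂ : 0 < b₂)
    (h : max (b₁ - 1 / 2) 0 + max (b₂ - 1 / 2) 0 < a₁ + a₂ - 1 / 2) :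
    ∃ C D : ℝ≥0, ∀ X Y : ℝ, 0 ≤ X → 0 ≤ Y → X + Y < 1 →
      normalizedF4 a₁ a₂ b₁ b₂ X Y ≤ C ∧ 1 ≤ D * normalizedF4 a₁ a₂ b₁ b₂ X Y := by
  have hcoeff := isTheta_appellCoeff ha₁ ha₂ hb₁ hb₂
  obtain ⟨C₁, hC₁⟩ := exists_tsum_ofReal_le_of_isBigO_top (fun p => by positivity) hcoeff.1
  obtain ⟨D₁, hD₁⟩ := exists_tsum_ofReal_le_of_isBigO_top
    (fun p => (appellCoeff_pos ha₁ ha₂ hb₁ hb₂ p).le) hcoeff.2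
  obtain ⟨C, hC⟩ := momentBounded (s := a₁ + a₂ - 1 / 2) (A := 1 / 2 - b₁) (B := 1 / 2 - b₂)
    (by simpa only [neg_sub] using h)
  obtain ⟨D, hD⟩ := momentBoundedBelow (a₁ + a₂ - 1 / 2) (1 / 2 - b₁) (1 / 2 - b₂)
  refine ⟨C₁ * C, D * D₁, fun X Y hX hY hXY => ?_⟩
  have hweight (p : ℕ × ℕ) : 0 ≤ X ^ (2 * p.1) * Y ^ (2 * p.2) /
      momentScale (a₁ + a₂ - 1 / 2) (1 / 2 - b₁) (1 / 2 - b₂) X Y :=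
    div_nonneg (by positivity) (momentScale_pos hX hY hXY).le
  have hupp := hC₁ _ hweight
  have hlow := hD₁ _ hweight
  simp only [← momentTerm_eq_mul_div_momentScale hX hY hXY] at hupp hlow
  rw [← moment, ← normalizedF4] at hupp hlow
  push_cast
  constructor
  · exact hupp.trans (mul_le_mul_right (hC X Y hX hY hXY) _)
  · rw [mul_assoc]
    exact (hD X Y hX hY hXY).trans (mul_le_mul_right hlow _)

lemma F4_sq_sq_nonneg (ha₁ : 0 < a₁) (ha₂ : 0 < a₂) (hb₁ : 0 < b₁) (hb₂ : 0 < b₂) (X Y : ℝ) :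
    0 ≤ F4 a₁ a₂ b₁ b₂ (X ^ 2) (Y ^ 2) := by
  rw [F4_sq_sq_eq_tsum]
  refine tsum_nonneg fun p => ?_
  have hp := appellCoeff_pos ha₁ ha₂ hb₁ hb₂ p
  have hXm := (even_two_mul p.1).pow_nonneg X
  have hYn := (even_two_mul p.2).pow_nonneg Y
  positivity

theorem isTheta_F4_sq_sq (ha₁ : 0 < a₁) (ha₂ : 0 < a₂) (hb₁ : 0 < b₁) (hb₂ : 0 < b₂)
    (h : max (b₁ - 1 / 2) 0 + max (b₂ - 1 / 2) 0 < a₁ + a₂ - 1 / 2) :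
    (fun z : ℝ × ℝ => F4 a₁ a₂ b₁ b₂ (z.1 ^ 2) (z.2 ^ 2)) =Θ[𝓟 convergenceTriangle]
      fun z => (1 - z.1 - z.2) ^ (b₁ + b₂ - (a₁ + a₂ + 1 / 2)) * (1 - z.2) ^ (1 / 2 - b₁) *
        (1 - z.1) ^ (1 / 2 - b₂) := by
  obtain ⟨C, D, hCD⟩ := exists_normalizedF4_bounds ha₁ ha₂ hb₁ hb₂ h
  set scale := momentScale (a₁ + a₂ - 1 / 2) (1 / 2 - b₁) (1 / 2 - b₂) with hscale
  have hscale₀ : ∀ z ∈ convergenceTriangle, 0 < scale z.1 z.2 :=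
    fun z hz => momentScale_pos hz.1 hz.2.1 hz.2.2
  have hbounds : ∀ z ∈ convergenceTriangle,
      F4 a₁ a₂ b₁ b₂ (z.1 ^ 2) (z.2 ^ 2) ≤ C * scale z.1 z.2 ∧
        scale z.1 z.2 ≤ D * F4 a₁ a₂ b₁ b₂ (z.1 ^ 2) (z.2 ^ 2) := by
    intro z hz
    obtain ⟨hupp, hlow⟩ := hCD z.1 z.2 hz.1 hz.2.1 hz.2.2
    have hfin := ne_top_of_le_ne_top ENNReal.coe_ne_top hupp
    rw [normalizedF4_eq_ofReal ha₁ ha₂ hb₁ hb₂ hz.1 hz.2.1 hz.2.2 hfin, ← hscale] at hupp hlow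
    rw [ENNReal.ofReal_le_coe, div_le_iff₀ (hscale₀ z hz)] at hupp
    rw [← ENNReal.ofReal_coe_nnreal, ← ENNReal.ofReal_mul D.coe_nonneg, ENNReal.one_le_ofReal,
      ← mul_div_assoc, one_le_div (hscale₀ z hz)] at hlow
    exact ⟨hupp, hlow⟩
  have hexp : b₁ + b₂ - (a₁ + a₂ + 1 / 2) =
      -(a₁ + a₂ - 1 / 2 + (1 / 2 - b₁) + (1 / 2 - b₂)) := by ring
  rw [hexp]
  exact isTheta_principal_of_le_mul (fun z _ => F4_sq_sq_nonneg ha₁ ha₂ hb₁ hb₂ z.1 z.2)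
    (fun z hz => (hscale₀ z hz).le) (fun z hz => (hbounds z hz).1) fun z hz => (hbounds z hz).2

end AppellFunction

section ShortTimeDomain

/-- The argument `X` of the kernel, so that `Hker` involves `F4` at `(X ^ 2, Y ^ 2)`. -/
noncomputable def sinProd (t θ φ : ℝ) : ℝ :=
  Real.sin (θ / 2) * Real.sin (φ / 2) / Real.cosh (t / 2)

/-- The argument `Y` of the kernel, so that `Hker` involves `F4` at `(X ^ 2, Y ^ 2)`. -/
noncomputable def cosProd (t θ φ : ℝ) : ℝ :=
  Real.cos (θ / 2) * Real.cos (φ / 2) / Real.cosh (t / 2)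

/-- The set of all `(t, θ, φ)` with `0 < t ≤ 1` and angles `θ`, `φ` in `[0, π]`. -/
def shortTimeDomain : Set (ℝ × ℝ × ℝ) := Ioc 0 1 ×ˢ Icc 0 π ×ˢ Icc 0 π

variable {t θ φ : ℝ}

lemma one_add_sq_div_two_le_cosh (x : ℝ) : 1 + x ^ 2 / 2 ≤ Real.cosh x := by
  have hdouble := Real.cosh_two_mul (x / 2)
  rw [mul_div_cancel₀ _ two_ne_zero] at hdouble
  have hsinh : (x / 2) ^ 2 ≤ Real.sinh (x / 2) ^ 2 := by
    rw [sq_le_sq, Real.abs_sinh]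
    exact Real.self_le_sinh_iff.2 (abs_nonneg _)
  rw [hdouble, Real.cosh_sq]
  linarith

lemma cosh_le_one_add_sq {x : ℝ} (hx : |x| ≤ 1) : Real.cosh x ≤ 1 + x ^ 2 := by
  have hx2 : x ^ 2 ≤ 1 := (sq_le_one_iff_abs_le_one x).2 hx
  have hexp := Real.exp_bound_div_one_sub_of_interval (x := x ^ 2 / 2) (by positivity)
    (by linarith)
  refine (Real.cosh_le_exp_half_sq x).trans (hexp.trans ?_)
  rw [div_le_iff₀ (by linarith)]
  nlinarith

lemma cos_le_one_sub_sq_div_eight {x : ℝ} (hx : |x| ≤ π) : Real.cos x ≤ 1 - x ^ 2 / 8 := by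
  have hpi : (1 : ℝ) / 8 ≤ 2 / π ^ 2 := by
    rw [div_le_div_iff₀ (by norm_num) (by positivity)]
    nlinarith [Real.pi_lt_four, Real.pi_pos]
  linarith [Real.cos_le_one_sub_mul_cos_sq hx, mul_le_mul_of_nonneg_right hpi (sq_nonneg x)]

lemma one_sub_cos_add_cos_bounds {u v : ℝ} (ht : |t| ≤ 1) (hu : |u| ≤ π) (hv : |v| ≤ π) :
    1 - (Real.cos u + Real.cos v) / 2 / Real.cosh (t / 2) ≤ t ^ 2 + u ^ 2 + v ^ 2 ∧
      t ^ 2 + u ^ 2 + v ^ 2 ≤ 32 * (1 - (Real.cos u + Real.cos v) / 2 / Real.cosh (t / 2)) := by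
  have hcosh := one_add_sq_div_two_le_cosh (t / 2)
  have hcosh' := cosh_le_one_add_sq (x := t / 2) (by
    rw [abs_div, abs_two]; linarith)
  have ht2 : t ^ 2 ≤ 1 := (sq_le_one_iff_abs_le_one t).2 ht
  have hcosu := cos_le_one_sub_sq_div_eight hu
  have hcosv := cos_le_one_sub_sq_div_eight hv
  have hcosu' := Real.one_sub_sq_div_two_le_cos (x := u)
  have hcosv' := Real.one_sub_sq_div_two_le_cos (x := v)
  have hquot : 1 - (Real.cos u + Real.cos v) / 2 / Real.cosh (t / 2) =
      (Real.cosh (t / 2) - (Real.cos u + Real.cos v) / 2) / Real.cosh (t / 2) := by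
    field_simp
  rw [hquot, ← mul_div_assoc, le_div_iff₀ (by positivity), div_le_iff₀ (by positivity)]
  constructor <;> nlinarith [sq_nonneg t, sq_nonneg u, sq_nonneg v]

lemma abs_le_one_of_mem_Ioc (ht : t ∈ Ioc (0 : ℝ) 1) : |t| ≤ 1 :=
  abs_le.2 ⟨by linarith [ht.1], ht.2⟩

lemma one_sub_cosProd_bounds (ht : |t| ≤ 1) (hθ : θ ∈ Icc 0 π) (hφ : φ ∈ Icc 0 π) :
    1 - cosProd t θ φ ≤ t ^ 2 + θ ^ 2 + φ ^ 2 ∧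
      t ^ 2 + θ ^ 2 + φ ^ 2 ≤ 64 * (1 - cosProd t θ φ) := by
  obtain ⟨hθ₀, hθ₁⟩ := hθ
  obtain ⟨hφ₀, hφ₁⟩ := hφ
  have hprod : cosProd t θ φ = (Real.cos (θ / 2 - φ / 2) + Real.cos (θ / 2 + φ / 2)) / 2 /
      Real.cosh (t / 2) := by
    rw [cosProd, Real.cos_sub, Real.cos_add]
    ring
  obtain ⟨hupp, hlow⟩ := one_sub_cos_add_cos_bounds ht (u := θ / 2 - φ / 2) (v := θ / 2 + φ / 2)
    (abs_le.2 ⟨by linarith, by linarith⟩) (abs_le.2 ⟨by linarith, by linarith⟩)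
  rw [← hprod] at hupp hlow
  constructor <;> linarith [sq_nonneg t, sq_nonneg θ, sq_nonneg φ]

lemma sinProd_eq_cosProd (t θ φ : ℝ) : sinProd t θ φ = cosProd t (π - θ) (π - φ) := by
  rw [sinProd, cosProd, sub_div, sub_div, Real.cos_pi_div_two_sub, Real.cos_pi_div_two_sub]

lemma one_sub_sinProd_bounds (ht : |t| ≤ 1) (hθ : θ ∈ Icc 0 π) (hφ : φ ∈ Icc 0 π) :
    1 - sinProd t θ φ ≤ t ^ 2 + (π - θ) ^ 2 + (π - φ) ^ 2 ∧
      t ^ 2 + (π - θ) ^ 2 + (π - φ) ^ 2 ≤ 64 * (1 - sinProd t θ φ) := by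
  rw [sinProd_eq_cosProd]
  exact one_sub_cosProd_bounds ht ⟨by linarith [hθ.2], by linarith [hθ.1]⟩
    ⟨by linarith [hφ.2], by linarith [hφ.1]⟩

lemma one_sub_sinProd_sub_cosProd_bounds (ht : |t| ≤ 1) (hθ : θ ∈ Icc 0 π) (hφ : φ ∈ Icc 0 π) :
    1 - sinProd t θ φ - cosProd t θ φ ≤ t ^ 2 + (θ - φ) ^ 2 ∧
      t ^ 2 + (θ - φ) ^ 2 ≤ 64 * (1 - sinProd t θ φ - cosProd t θ φ) := by
  obtain ⟨hθ₀, hθ₁⟩ := hθ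
  obtain ⟨hφ₀, hφ₁⟩ := hφ
  have hsum : 1 - sinProd t θ φ - cosProd t θ φ =
      1 - (Real.cos (θ / 2 - φ / 2) + Real.cos (θ / 2 - φ / 2)) / 2 / Real.cosh (t / 2) := by
    rw [sinProd, cosProd, Real.cos_sub]
    ring
  have hu : |θ / 2 - φ / 2| ≤ π := abs_le.2 ⟨by linarith, by linarith⟩
  obtain ⟨hupp, hlow⟩ := one_sub_cos_add_cos_bounds ht hu hu
  rw [← hsum] at hupp hlow
  constructor <;> linarith [sq_nonneg t, sq_nonneg (θ - φ)]

lemma sinh_half_le {t : ℝ} (ht : t ∈ Icc (0 : ℝ) 1) : Real.sinh (t / 2) ≤ t := by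
  obtain ⟨ht₀, ht₁⟩ := ht
  have hcosh := cosh_le_one_add_sq (x := t / 2) (by rw [abs_of_nonneg (by positivity)]; linarith)
  refine (abs_le_of_sq_le_sq' ?_ ht₀).2
  have hsq : Real.cosh (t / 2) ^ 2 ≤ (1 + (t / 2) ^ 2) ^ 2 := by gcongr
  rw [Real.sinh_sq]
  nlinarith [mul_nonneg (sq_nonneg t) (sub_nonneg.2 (pow_le_one₀ ht₀ ht₁ : t ^ 2 ≤ 1))]

lemma isTheta_sinh_div_cosh_rpow (s : ℝ) :
    (fun t => Real.sinh (t / 2) / Real.cosh (t / 2) ^ s) =Θ[𝓟 (Ioc 0 1)] fun t => t := by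
  have hsinh : (fun t => Real.sinh (t / 2)) =Θ[𝓟 (Ioc 0 1)] fun t => t :=
    isTheta_principal_of_le_mul (C := 1) (D := 2)
      (fun t ht => Real.sinh_nonneg_iff.2 (half_pos ht.1).le) (fun t ht => ht.1.le)
      (fun t ht => by simpa using sinh_half_le (Ioc_subset_Icc_self ht))
      fun t ht => by linarith [Real.self_le_sinh_iff.2 (half_pos ht.1).le]
  have hcosh : (fun t => Real.cosh (t / 2) ^ s) =Θ[𝓟 (Icc 0 1)] fun _ => (1 : ℝ) := by
    have hcont : Continuous fun t : ℝ => Real.cosh (t / 2) ^ s :=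
      (Real.continuous_cosh.comp (continuous_id.div_const 2)).rpow_const
        fun t => Or.inl (Real.cosh_pos _).ne'
    exact hcont.continuousOn.isTheta_principal isCompact_Icc (by simp)
      fun t _ => (Real.rpow_pos_of_pos (Real.cosh_pos _) s).ne'
  simpa using hsinh.div (hcosh.mono (principal_mono.2 Ioc_subset_Icc_self))

lemma sinProd_cosProd_mem_convergenceTriangle (ht : t ∈ Ioc 0 1) (hθ : θ ∈ Icc 0 π)
    (hφ : φ ∈ Icc 0 π) : (sinProd t θ φ, cosProd t θ φ) ∈ convergenceTriangle := by
  have hsum := (one_sub_sinProd_sub_cosProd_bounds (abs_le_one_of_mem_Ioc ht) hθ hφ).2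
  have ht₀ := sq_pos_of_pos ht.1
  have hsin {x : ℝ} (hx : x ∈ Icc 0 π) : 0 ≤ Real.sin (x / 2) :=
    Real.sin_nonneg_of_nonneg_of_le_pi (by linarith [hx.1]) (by linarith [hx.1, hx.2])
  have hcos {x : ℝ} (hx : x ∈ Icc 0 π) : 0 ≤ Real.cos (x / 2) :=
    Real.cos_nonneg_of_mem_Icc ⟨by linarith [hx.1, Real.pi_pos], by linarith [hx.2]⟩
  refine ⟨div_nonneg (mul_nonneg (hsin hθ) (hsin hφ)) (Real.cosh_pos _).le,
    div_nonneg (mul_nonneg (hcos hθ) (hcos hφ)) (Real.cosh_pos _).le, ?_⟩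
  linarith [sq_nonneg (θ - φ)]

end ShortTimeDomain

section Kernel

variable {α β : ℝ}

lemma cab_pos (hα : -1 < α) (hβ : -1 < β) : 0 < cab α β := by
  have hαβ := Real.Gamma_pos_of_pos (s := α + β + 2) (by linarith)
  have hα' := Real.Gamma_pos_of_pos (s := α + 1) (by linarith)
  have hβ' := Real.Gamma_pos_of_pos (s := β + 1) (by linarith)
  rw [cab]
  positivity

lemma isTheta_F4_sinProd_cosProd (hα : -1 < α) (hβ : -1 < β) :
    (fun q : ℝ × ℝ × ℝ => F4 ((α + β + 2) / 2) ((α + β + 3) / 2) (α + 1) (β + 1)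
      (sinProd q.1 q.2.1 q.2.2 ^ 2) (cosProd q.1 q.2.1 q.2.2 ^ 2)) =Θ[𝓟 shortTimeDomain]
      fun q => (1 - sinProd q.1 q.2.1 q.2.2 - cosProd q.1 q.2.1 q.2.2) ^ (-1 : ℝ) *
        (1 - cosProd q.1 q.2.1 q.2.2) ^ (-α - 1 / 2) *
        (1 - sinProd q.1 q.2.1 q.2.2) ^ (-β - 1 / 2) := by
  have hF4 := isTheta_F4_sq_sq (a₁ := (α + β + 2) / 2) (a₂ := (α + β + 3) / 2) (b₁ := α + 1)
    (b₂ := β + 1) (by linarith) (by linarith) (by linarith) (by linarith) (by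
      rcases max_cases (α + 1 - 1 / 2) 0 with h | h <;>
      rcases max_cases (β + 1 - 1 / 2) 0 with h' | h' <;> linarith)
  rw [show α + 1 + (β + 1) - ((α + β + 2) / 2 + (α + β + 3) / 2 + 1 / 2) = -1 by ring,
    show 1 / 2 - (α + 1) = -α - 1 / 2 by ring, show 1 / 2 - (β + 1) = -β - 1 / 2 by ring] at hF4
  have hargs : Tendsto (fun q : ℝ × ℝ × ℝ => (sinProd q.1 q.2.1 q.2.2, cosProd q.1 q.2.1 q.2.2))
      (𝓟 shortTimeDomain) (𝓟 convergenceTriangle) :=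
    tendsto_principal_principal.2 fun q hq =>
      sinProd_cosProd_mem_convergenceTriangle hq.1 hq.2.1 hq.2.2
  exact isTheta_comp_of_tendsto hF4 hargs

lemma isTheta_sinProd_cosProd_profile (r a b : ℝ) :
    (fun q : ℝ × ℝ × ℝ => (1 - sinProd q.1 q.2.1 q.2.2 - cosProd q.1 q.2.1 q.2.2) ^ r *
      (1 - cosProd q.1 q.2.1 q.2.2) ^ a * (1 - sinProd q.1 q.2.1 q.2.2) ^ b)
      =Θ[𝓟 shortTimeDomain] fun q => (q.1 ^ 2 + (q.2.1 - q.2.2) ^ 2) ^ r *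
        (q.1 ^ 2 + q.2.1 ^ 2 + q.2.2 ^ 2) ^ a *
        (q.1 ^ 2 + (π - q.2.1) ^ 2 + (π - q.2.2) ^ 2) ^ b := by
  have htriangle : ∀ q ∈ shortTimeDomain, 0 ≤ sinProd q.1 q.2.1 q.2.2 ∧
      0 ≤ cosProd q.1 q.2.1 q.2.2 ∧ sinProd q.1 q.2.1 q.2.2 + cosProd q.1 q.2.1 q.2.2 < 1 :=
    fun q hq => sinProd_cosProd_mem_convergenceTriangle hq.1 hq.2.1 hq.2.2
  refine ((isTheta_rpow_principal_of_le_mul (C := 1) (D := 64) ?_ (fun q _ => by positivity)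
    (fun q hq => ?_) r).mul (isTheta_rpow_principal_of_le_mul (C := 1) (D := 64) ?_
    (fun q _ => by positivity) (fun q hq => ?_) a)).mul (isTheta_rpow_principal_of_le_mul (C := 1)
    (D := 64) ?_ (fun q _ => by positivity) (fun q hq => ?_) b)
  · exact fun q hq => by linarith [(htriangle q hq).2.2]
  · simpa using one_sub_sinProd_sub_cosProd_bounds (abs_le_one_of_mem_Ioc hq.1) hq.2.1 hq.2.2
  · exact fun q hq => by linarith [(htriangle q hq).1, (htriangle q hq).2.2]
  · simpa using one_sub_cosProd_bounds (abs_le_one_of_mem_Ioc hq.1) hq.2.1 hq.2.2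
  · exact fun q hq => by linarith [(htriangle q hq).2.1, (htriangle q hq).2.2]
  · simpa using one_sub_sinProd_bounds (abs_le_one_of_mem_Ioc hq.1) hq.2.1 hq.2.2

lemma Hker_nonneg (hα : -1 < α) (hβ : -1 < β) {t : ℝ} (ht : 0 ≤ t) (θ φ : ℝ) :
    0 ≤ Hker α β t θ φ := by
  have hF4 := F4_sq_sq_nonneg (a₁ := (α + β + 2) / 2) (a₂ := (α + β + 3) / 2) (b₁ := α + 1)
    (b₂ := β + 1) (by linarith) (by linarith) (by linarith) (by linarith)
    (sinProd t θ φ) (cosProd t θ φ)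
  have hcab := cab_pos hα hβ
  exact mul_nonneg (by positivity) hF4

theorem isTheta_Hker (hα : -1 < α) (hβ : -1 < β) :
    (fun q : ℝ × ℝ × ℝ => Hker α β q.1 q.2.1 q.2.2) =Θ[𝓟 shortTimeDomain] fun q =>
      (q.1 ^ 2 + q.2.1 ^ 2 + q.2.2 ^ 2) ^ (-α - 1 / 2) *
        (q.1 ^ 2 + (π - q.2.1) ^ 2 + (π - q.2.2) ^ 2) ^ (-β - 1 / 2) *
        (q.1 / (q.1 ^ 2 + (q.2.1 - q.2.2) ^ 2)) := by
  have hfst : Tendsto Prod.fst (𝓟 shortTimeDomain) (𝓟 (Ioc 0 1)) :=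
    tendsto_principal_principal.2 fun q hq => hq.1
  have hprefactor : (fun q : ℝ × ℝ × ℝ => Real.sinh (q.1 / 2) / Real.cosh (q.1 / 2) ^ (α + β + 2))
      =Θ[𝓟 shortTimeDomain] fun q => q.1 :=
    isTheta_comp_of_tendsto (isTheta_sinh_div_cosh_rpow (α + β + 2)) hfst
  have hF4 := (isTheta_F4_sinProd_cosProd hα hβ).trans
    (isTheta_sinProd_cosProd_profile (-1) (-α - 1 / 2) (-β - 1 / 2))
  have hHker : (fun q : ℝ × ℝ × ℝ => Hker α β q.1 q.2.1 q.2.2) = fun q => cab α β *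
      (Real.sinh (q.1 / 2) / Real.cosh (q.1 / 2) ^ (α + β + 2) *
        F4 ((α + β + 2) / 2) ((α + β + 3) / 2) (α + 1) (β + 1)
          (sinProd q.1 q.2.1 q.2.2 ^ 2) (cosProd q.1 q.2.1 q.2.2 ^ 2)) := by
    funext q
    rw [Hker, sinProd, cosProd]
    ring
  rw [hHker, isTheta_const_mul_left (cab_pos hα hβ).ne']
  refine (hprefactor.mul hF4).trans_eventuallyEq (Eventually.of_forall fun q => ?_)
  simp only [Real.rpow_neg_one]
  ring

end Kernel

theorem jacobi_poisson_sharp_short_time (α β : ℝ) (hα : -1 < α) (hβ : -1 < β) :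
    ∃ c C : ℝ, 0 < c ∧ c ≤ C ∧ ∀ t : ℝ, 0 < t → t ≤ 1 →
      ∀ θ ∈ Icc (0 : ℝ) π, ∀ φ ∈ Icc (0 : ℝ) π,
      c * ((t ^ 2 + θ ^ 2 + φ ^ 2) ^ (-α - 1/2) *
          (t ^ 2 + (π - θ) ^ 2 + (π - φ) ^ 2) ^ (-β - 1/2) *
          (t / (t ^ 2 + (θ - φ) ^ 2)))
        ≤ Hker α β t θ φ ∧
      Hker α β t θ φ ≤
        C * ((t ^ 2 + θ ^ 2 + φ ^ 2) ^ (-α - 1/2) *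
          (t ^ 2 + (π - θ) ^ 2 + (π - φ) ^ 2) ^ (-β - 1/2) *
          (t / (t ^ 2 + (θ - φ) ^ 2))) := by
  have hHker : ∀ q ∈ shortTimeDomain, 0 ≤ Hker α β q.1 q.2.1 q.2.2 :=
    fun q hq => Hker_nonneg hα hβ hq.1.1.le q.2.1 q.2.2
  obtain ⟨c, C, hc, hcC, hbounds⟩ := exists_mul_le_of_isTheta_principal hHker
    (fun q hq => by have := hq.1.1; positivity) (isTheta_Hker hα hβ)
  exact ⟨c, C, hc, hcC, fun t ht₀ ht₁ θ hθ φ hφ => hbounds (t, θ, φ) ⟨⟨ht₀, ht₁⟩, hθ, hφ⟩⟩
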